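/- Let s ∈ (0,1), u ∈ C_c^∞(ℝⁿ), and let U be its Caffarelli–Silvestre extension. Then for every compact set K ⊂ ℝⁿ, sup_{x ∈ K} | z^{−2s} ( U(x,z) − u(x) ) + (2s β_s)^{−1} (−Δ)^s u(x) | → 0 as z → 0⁺; that is, U(x,z) = u(x) − ( z^{2s} / (2s β_s) ) (−Δ)^s u(x) + o(z^{2s}) uniformly on compact subsets of ℝⁿ. -/

import Mathlib

open MeasureTheory Filter Set
open scoped Topology ENNReal NNReal

noncomputable section

/-- `ℝⁿ` with the Euclidean norm. -/
abbrev En (n : ℕ) := EuclideanSpace ℝ (Fin n)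

/-- The normalizing constant `p(n,s) = Γ(n/2+s)/(π^{n/2} Γ(s))` of the Poisson kernel. -/
def pns (n : ℕ) (s : ℝ) : ℝ :=
  Real.Gamma ((n : ℝ) / 2 + s) / (Real.pi ^ ((n : ℝ) / 2) * Real.Gamma s)

/-- The fractional Poisson kernel `P_z^{(s)}(x) = p(n,s) z^{2s} (|x|² + z²)^{-(n+2s)/2}`. -/
def Pker (n : ℕ) (s z : ℝ) (x : En n) : ℝ :=
  pns n s * z ^ (2 * s) * (‖x‖ ^ 2 + z ^ 2) ^ (-((n : ℝ) + 2 * s) / 2)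

/-- Convolution with the fractional Poisson kernel in the first variable, at fixed `z`. -/
def Pconv (n : ℕ) (s z : ℝ) (f : En n → ℝ) (x : En n) : ℝ :=
  ∫ y, Pker n s z (x - y) * f y

/-- The Caffarelli–Silvestre extension `U(x,z) = (P_z^{(s)} ∗ u)(x)`. -/
def CSext (n : ℕ) (s : ℝ) (u : En n → ℝ) (x : En n) (z : ℝ) : ℝ :=
  Pconv n s z u x

/-- The constant `C(n,s) = 4^s Γ(n/2+s) / (π^{n/2} |Γ(-s)|)`. -/
def Cns (n : ℕ) (s : ℝ) : ℝ :=
  4 ^ s * Real.Gamma ((n : ℝ) / 2 + s) / (Real.pi ^ ((n : ℝ) / 2) * |Real.Gamma (-s)|)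

/-- The fractional Laplacian `(-Δ)^s w(x)` as a principal-value singular integral. -/
def fracLap (n : ℕ) (s : ℝ) (w : En n → ℝ) (x : En n) : ℝ :=
  Cns n s * limUnder (𝓝[>] (0 : ℝ))
    (fun ε : ℝ => ∫ y in {y : En n | ε < ‖x - y‖}, (w x - w y) / ‖x - y‖ ^ ((n : ℝ) + 2 * s))

/-- `Λ^s w := -(-Δ)^s w`. -/
def Lam (n : ℕ) (s : ℝ) (w : En n → ℝ) (x : En n) : ℝ := - fracLap n s w x

/-- The first-order carré du champ `Γ₁(u,v) = ½(Λ^s(uv) - u Λ^s v - v Λ^s u)`. -/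
def Gamma1 (n : ℕ) (s : ℝ) (u v : En n → ℝ) (x : En n) : ℝ :=
  (Lam n s (fun y => u y * v y) x - u x * Lam n s v x - v x * Lam n s u x) / 2

/-- The constant `β_s = 2^{2s-1} Γ(s)/Γ(1-s)`. -/
def betaS (s : ℝ) : ℝ := 2 ^ (2 * s - 1) * Real.Gamma s / Real.Gamma (1 - s)

/-- Partial derivative in the `i`-th coordinate direction. -/
def pd {n : ℕ} (i : Fin n) (f : En n → ℝ) (x : En n) : ℝ :=
  fderiv ℝ f x (EuclideanSpace.single i 1)

/-- The Laplacian in the `x`-variables. -/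
def lapX {n : ℕ} (f : En n → ℝ) (x : En n) : ℝ := ∑ i, pd i (pd i f) x

/-- The degenerate operator `L_s W = div_{x,z}(z^{1-2s} ∇̃W)`, written out as
`z^{1-2s} Δ_x W + ∂_z(z^{1-2s} ∂_z W)`. -/
def LsOp {n : ℕ} (s : ℝ) (W : En n → ℝ → ℝ) (x : En n) (z : ℝ) : ℝ :=
  z ^ (1 - 2 * s) * lapX (fun y => W y z) x
    + deriv (fun t => t ^ (1 - 2 * s) * deriv (W x) t) z

/-! Let `K_z(x) = (|x|² + z²)^{-(n+2s)/2}`. Since `K_z` is even and the Poisson kernel has mass one,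
`z^{-2s} (U(x,z) - u(x))` is `p(n,s)/2` times the integral of `K_z` against the second difference
`δu(x,h) = u(x+h) + u(x-h) - 2u(x)`. Symmetrising in the same way, `(-Δ)^s u(x)` is `-C(n,s)/2`
times the integral of `K_0` against `δu(x,·)`. The constants match because
`C(n,s) = 2sβ_s p(n,s)`. As `|δu(x,h)| ≤ M min(1,|h|²)` uniformly in `x`, the error is at most a
constant times `∫ min(1,|h|²) |K_z(h) - K_0(h)| dh`, which tends to `0` by dominated convergence,
with dominating function `min(1,|h|²) K_0(h)`. -/

/-! ### Second differences -/

section SecondDifference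

/-- The symmetric second difference `u(x+h) + u(x-h) - 2u(x)`. Integrating it against an even
kernel gives twice the integral of `u(x-h) - u(x)`, but it is of second order in `h`, so that the
singular kernel of the fractional Laplacian is integrable against it without a principal value. -/
def secondDifference {G F : Type*} [AddGroup G] [AddCommGroup F] (u : G → F) (x h : G) : F :=
  u (x + h) + u (x - h) - 2 • u x

lemma secondDifference_eq_add {G F : Type*} [AddGroup G] [AddCommGroup F] (u : G → F) (x h : G) :
    secondDifference u x h = (u (x + h) - u x) + (u (x - h) - u x) := by
  rw [secondDifference]
  abel

lemma secondDifference_zero {G F : Type*} [AddGroup G] [AddCommGroup F] (u : G → F) (x : G) :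
    secondDifference u x 0 = 0 := by
  simp [secondDifference_eq_add]

lemma continuous_secondDifference {G F : Type*} [AddGroup G] [TopologicalSpace G]
    [IsTopologicalAddGroup G] [AddCommGroup F] [TopologicalSpace F] [IsTopologicalAddGroup F]
    {u : G → F} (hu : Continuous u) (x : G) : Continuous (secondDifference u x) := by
  unfold secondDifference
  fun_prop

lemma norm_secondDifference_le_of_norm_le {G F : Type*} [AddGroup G] [NormedAddCommGroup F]
    {u : G → F} {B : ℝ} (hB : ∀ x, ‖u x‖ ≤ B) (x h : G) :
    ‖secondDifference u x h‖ ≤ 4 * B := by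
  rw [secondDifference_eq_add]
  calc ‖(u (x + h) - u x) + (u (x - h) - u x)‖
      ≤ (‖u (x + h)‖ + ‖u x‖) + (‖u (x - h)‖ + ‖u x‖) :=
        norm_add_le_of_le (norm_sub_le _ _) (norm_sub_le _ _)
    _ ≤ 4 * B := by linarith [hB (x + h), hB (x - h), hB x]

variable {E F : Type*} [NormedAddCommGroup E] [NormedSpace ℝ E] [NormedAddCommGroup F]
  [NormedSpace ℝ F] {u : E → F}

lemma norm_secondDifference_le_of_lipschitzWith_fderiv (hu : Differentiable ℝ u) {L : ℝ≥0}
    (hL : LipschitzWith L (fderiv ℝ u)) (x h : E) :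
    ‖secondDifference u x h‖ ≤ 2 * L * ‖h‖ ^ 2 := by
  have hderiv (k : E) : HasFDerivAt (fun k => u (x + k) + u (x - k))
      (fderiv ℝ u (x + k) - fderiv ℝ u (x - k)) k := by
    have hsub := (hu (x - k)).hasFDerivAt.comp k ((hasFDerivAt_id k).const_sub x)
    simpa [Function.comp_def, sub_eq_add_neg] using
      ((hasFDerivAt_comp_add_left x).2 (hu (x + k)).hasFDerivAt).fun_add hsub
  have hbound (k : E) (hk : k ∈ Metric.closedBall 0 ‖h‖) :
      ‖fderiv ℝ u (x + k) - fderiv ℝ u (x - k)‖ ≤ L * (2 * ‖h‖) := by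
    refine (hL.norm_sub_le _ _).trans ?_
    gcongr
    calc ‖x + k - (x - k)‖ = ‖k + k‖ := by congr 1; abel
      _ ≤ ‖k‖ + ‖k‖ := norm_add_le k k
      _ ≤ 2 * ‖h‖ := by linarith [mem_closedBall_zero_iff.1 hk]
  have hmvt := (convex_closedBall (0 : E) ‖h‖).norm_image_sub_le_of_norm_hasFDerivWithin_le
    (fun k _ => (hderiv k).hasFDerivWithinAt) hbound (x := 0) (y := h) (by simp) (by simp)
  calc ‖secondDifference u x h‖ = ‖u (x + h) + u (x - h) - (u (x + 0) + u (x - 0))‖ := by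
        simp [secondDifference, two_nsmul]
    _ ≤ L * (2 * ‖h‖) * ‖h - 0‖ := hmvt
    _ = 2 * L * ‖h‖ ^ 2 := by rw [sub_zero]; ring

lemma norm_secondDifference_le {B : ℝ} (hB : ∀ x, ‖u x‖ ≤ B) (hu : Differentiable ℝ u) {L : ℝ≥0}
    (hL : LipschitzWith L (fderiv ℝ u)) (x h : E) :
    ‖secondDifference u x h‖ ≤ max (4 * B) (2 * L) * min 1 (‖h‖ ^ 2) := by
  rcases le_total 1 (‖h‖ ^ 2) with hh | hh
  · rw [min_eq_left hh, mul_one]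
    exact (norm_secondDifference_le_of_norm_le hB x h).trans (le_max_left _ _)
  · rw [min_eq_right hh]
    exact (norm_secondDifference_le_of_lipschitzWith_fderiv hu hL x h).trans
      (by gcongr; exact le_max_right _ _)

end SecondDifference

lemma integral_smul_sub_eq_half_smul_integral_secondDifference {G F : Type*} [AddCommGroup G]
    [MeasurableSpace G] [MeasurableAdd G] [MeasurableNeg G] {μ : Measure G}
    [μ.IsAddLeftInvariant] [μ.IsNegInvariant] [NormedAddCommGroup F] [NormedSpace ℝ F]
    {k : G → ℝ} (hk : Integrable k μ) (hk_even : k.Even) {u : G → F} (hu : StronglyMeasurable u)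
    {B : ℝ} (hB : ∀ x, ‖u x‖ ≤ B) (x : G) :
    ∫ y, k (x - y) • (u y - u x) ∂μ
      = (1 / 2 : ℝ) • ∫ h, k h • secondDifference u x h ∂μ := by
  have hsub : ∫ y, k (x - y) • (u y - u x) ∂μ = ∫ h, k h • (u (x - h) - u x) ∂μ := by
    rw [← integral_sub_left_eq_self (fun h => k h • (u (x - h) - u x)) μ x]
    simp
  have hadd : ∫ h, k h • (u (x + h) - u x) ∂μ = ∫ h, k h • (u (x - h) - u x) ∂μ := by
    rw [← integral_neg_eq_self (fun h => k h • (u (x + h) - u x)) μ]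
    simp [hk_even _, sub_eq_add_neg]
  have hint {v : G → F} (hv : StronglyMeasurable v) (hvB : ∀ h, ‖v h‖ ≤ B) :
      Integrable (fun h => k h • (v h - u x)) μ :=
    hk.smul_bdd (B + B) (hv.sub stronglyMeasurable_const).aestronglyMeasurable
      (.of_forall fun h => norm_sub_le_of_le (hvB h) (hB x))
  have hint_add : Integrable (fun h => k h • (u (x + h) - u x)) μ :=
    hint (hu.comp_measurable (measurable_const_add x)) fun h => hB (x + h)
  have hint_sub : Integrable (fun h => k h • (u (x - h) - u x)) μ := by
    simp only [sub_eq_add_neg x]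
    exact hint (hu.comp_measurable (measurable_neg.const_add x)) fun h => hB (x + -h)
  have htwo : ∫ h, k h • secondDifference u x h ∂μ
      = (2 : ℝ) • ∫ h, k h • (u (x - h) - u x) ∂μ := by
    simp only [secondDifference_eq_add, smul_add]
    rw [integral_add hint_add hint_sub, hadd, two_smul]
  rw [hsub, htwo, smul_smul]
  norm_num

lemma tendsto_setIntegral_lt_norm {E F : Type*} [NormedAddCommGroup E] [MeasurableSpace E]
    [OpensMeasurableSpace E] {μ : Measure E} [NormedAddCommGroup F] [NormedSpace ℝ F]
    {f : E → F} (hf : Integrable f μ) (hf0 : f 0 = 0) :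
    Tendsto (fun ε : ℝ => ∫ x in {x | ε < ‖x‖}, f x ∂μ) (𝓝[>] 0) (𝓝 (∫ x, f x ∂μ)) := by
  have hmeas (ε : ℝ) : MeasurableSet {x : E | ε < ‖x‖} :=
    measurableSet_lt measurable_const measurable_norm
  simp_rw [← integral_indicator (hmeas _)]
  refine tendsto_integral_filter_of_dominated_convergence (fun x => ‖f x‖)
    (.of_forall fun ε => hf.aestronglyMeasurable.indicator (hmeas ε))
    (.of_forall fun ε => .of_forall fun x => norm_indicator_le_norm_self _ _) hf.norm
    (.of_forall fun x => tendsto_const_nhds.congr' ?_)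
  rcases eq_or_ne x 0 with rfl | hx
  · exact .of_forall fun ε => by simp [indicator_apply, hf0]
  · filter_upwards [nhdsWithin_le_nhds (Iio_mem_nhds (norm_pos_iff.2 hx))] with ε hε
    exact (indicator_of_mem (mem_ofPred_eq ▸ hε) f).symm

/-! ### The kernel `(|x|² + z²)^{-(n+2s)/2}` -/

lemma integrableOn_min_one_sq_mul_rpow {a : ℝ} (ha : -3 < a) (ha' : a < -1) :
    IntegrableOn (fun r : ℝ => min 1 (r ^ 2) * r ^ a) (Ioi 0) := by
  rw [← Ioo_union_Ici_eq_Ioi (zero_lt_one' ℝ), integrableOn_union,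
    integrableOn_Ici_iff_integrableOn_Ioi]
  constructor
  · refine ((intervalIntegral.integrableOn_Ioo_rpow_iff (s := 2 + a) one_pos).2
      (by linarith)).congr_fun (fun r hr => ?_) measurableSet_Ioo
    simp only [min_eq_right (pow_le_one₀ hr.1.le hr.2.le), Real.rpow_add hr.1, Real.rpow_two]
  · refine (integrableOn_Ioi_rpow_of_lt ha' one_pos).congr_fun (fun r hr => ?_) measurableSet_Ioi
    simp only [min_eq_left (one_le_pow₀ (mem_Ioi.1 hr).le), one_mul]

section FracKernel

variable {E : Type*} [NormedAddCommGroup E] [NormedSpace ℝ E]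

/-- The unnormalised fractional Poisson kernel `(|x|² + z²)^{-(n+2s)/2}`, where `n` is the dimension
of the space. For `z = 0` it is the singular kernel `|x|^{-(n+2s)}` of the fractional Laplacian. -/
def fracKernel (s z : ℝ) (x : E) : ℝ :=
  (‖x‖ ^ 2 + z ^ 2) ^ (-((Module.finrank ℝ E : ℝ) + 2 * s) / 2)

lemma fracKernel_zero_eq_norm_rpow (s : ℝ) (x : E) :
    fracKernel s 0 x = ‖x‖ ^ (-((Module.finrank ℝ E : ℝ) + 2 * s)) := by
  rw [fracKernel, zero_pow two_ne_zero, add_zero, ← Real.rpow_natCast_mul (norm_nonneg x)]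
  congr 1
  push_cast
  ring

lemma fracKernel_nonneg (s z : ℝ) (x : E) : 0 ≤ fracKernel s z x := by
  unfold fracKernel
  positivity

lemma fracKernel_even (s z : ℝ) : (fracKernel s z : E → ℝ).Even := fun x => by
  simp only [fracKernel, norm_neg]

lemma measurable_fracKernel [MeasurableSpace E] [OpensMeasurableSpace E] (s z : ℝ) :
    Measurable (fracKernel s z : E → ℝ) := by
  unfold fracKernel
  fun_prop

lemma continuous_fracKernel_of_ne_zero (s : ℝ) {x : E} (hx : x ≠ 0) :
    Continuous fun z => fracKernel s z x := by
  have := norm_pos_iff.2 hx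
  exact Continuous.rpow_const (by fun_prop) fun z => .inl (by positivity)

variable {s : ℝ}

lemma min_one_norm_sq_mul_fracKernel_le (hs : 0 < s) (z : ℝ) (x : E) :
    min 1 (‖x‖ ^ 2) * fracKernel s z x ≤ min 1 (‖x‖ ^ 2) * fracKernel s 0 x := by
  rcases eq_or_ne x 0 with rfl | hx
  · simp
  have : 0 < ‖x‖ := norm_pos_iff.2 hx
  unfold fracKernel
  refine mul_le_mul_of_nonneg_left (Real.rpow_le_rpow_of_nonpos (by positivity) ?_ ?_)
    (by positivity)
  · simp [sq_nonneg z]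
  · rw [neg_div]
    exact neg_nonpos.2 (by positivity)

variable [FiniteDimensional ℝ E] [MeasurableSpace E] [BorelSpace E] {μ : Measure E}
  [μ.IsAddHaarMeasure]

lemma integrable_min_one_norm_sq_mul_norm_rpow {a : ℝ} (ha : -(Module.finrank ℝ E + 2 : ℝ) < a)
    (ha' : a < -(Module.finrank ℝ E : ℝ)) :
    Integrable (fun x : E => min 1 (‖x‖ ^ 2) * ‖x‖ ^ a) μ := by
  rcases subsingleton_or_nontrivial E with _ | _
  · exact .of_finite
  have hdim : 1 ≤ Module.finrank ℝ E := Module.finrank_pos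
  refine (integrable_fun_norm_addHaar μ (f := fun r => min 1 (r ^ 2) * r ^ a)).2 ?_
  refine (integrableOn_min_one_sq_mul_rpow (a := (Module.finrank ℝ E - 1 : ℕ) + a) ?_ ?_).congr_fun
    (fun r hr => ?_) measurableSet_Ioi
  · push_cast [hdim]
    linarith
  · push_cast [hdim]
    linarith
  · simp only [Real.rpow_add hr, Real.rpow_natCast, smul_eq_mul]
    ring

lemma integrable_min_one_norm_sq_mul_fracKernel (hs0 : 0 < s) (hs1 : s < 1) (z : ℝ) :
    Integrable (fun x : E => min 1 (‖x‖ ^ 2) * fracKernel s z x) μ := by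
  have hzero : Integrable (fun x : E => min 1 (‖x‖ ^ 2) * fracKernel s 0 x) μ := by
    simp only [fracKernel_zero_eq_norm_rpow]
    exact integrable_min_one_norm_sq_mul_norm_rpow (by linarith) (by linarith)
  refine hzero.mono' ?_ (.of_forall fun x => ?_)
  · exact (Measurable.mul (by fun_prop) (measurable_fracKernel s z)).aestronglyMeasurable
  · rw [Real.norm_of_nonneg (mul_nonneg (by positivity) (fracKernel_nonneg s z x))]
    exact min_one_norm_sq_mul_fracKernel_le hs0 z x

lemma integrableOn_fracKernel_zero (hs0 : 0 < s) (hs1 : s < 1) {ε : ℝ} (hε : 0 < ε) :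
    IntegrableOn (fracKernel s 0 : E → ℝ) {x | ε < ‖x‖} μ := by
  have hweight := (integrable_min_one_norm_sq_mul_fracKernel (μ := μ) (E := E) hs0 hs1 0).const_mul
    (min 1 (ε ^ 2))⁻¹
  refine hweight.integrableOn.mono' (measurable_fracKernel s 0).aestronglyMeasurable
    (ae_restrict_of_forall_mem (measurableSet_lt measurable_const measurable_norm)
      fun x (hx : ε < ‖x‖) => ?_)
  have hK := fracKernel_nonneg s 0 x
  rw [Real.norm_of_nonneg hK, ← mul_assoc, inv_mul_eq_div]
  refine le_mul_of_one_le_left hK ((one_le_div (by positivity)).2 ?_)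
  gcongr

lemma tendsto_integral_min_one_norm_sq_mul_abs_fracKernel_sub (hs0 : 0 < s) (hs1 : s < 1) :
    Tendsto (fun z => ∫ h : E, min 1 (‖h‖ ^ 2) * |fracKernel s z h - fracKernel s 0 h| ∂μ)
      (𝓝 0) (𝓝 0) := by
  suffices Tendsto (fun z => ∫ h : E, min 1 (‖h‖ ^ 2) * |fracKernel s z h - fracKernel s 0 h| ∂μ)
      (𝓝 0) (𝓝 (∫ _, 0 ∂μ)) by simpa using this
  refine tendsto_integral_filter_of_dominated_convergence
    (fun h => min 1 (‖h‖ ^ 2) * fracKernel s 0 h) (.of_forall fun z => ?_)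
    (.of_forall fun z => .of_forall fun h => ?_)
    (integrable_min_one_norm_sq_mul_fracKernel hs0 hs1 0) (.of_forall fun h => ?_)
  · have hz := measurable_fracKernel (E := E) s z
    have h0 := measurable_fracKernel (E := E) s 0
    exact Measurable.aestronglyMeasurable (by fun_prop)
  · have hle := min_one_norm_sq_mul_fracKernel_le hs0 z h
    have hw : 0 ≤ min 1 (‖h‖ ^ 2) := by positivity
    have hnonneg := mul_nonneg hw (fracKernel_nonneg s z h)
    rw [Real.norm_of_nonneg (by positivity), ← abs_of_nonneg hw, ← abs_mul, abs_of_nonneg hw,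
      mul_sub, abs_of_nonpos (by linarith)]
    linarith
  · rcases eq_or_ne h 0 with rfl | hh
    · simp
    · have hlim := ((continuous_fracKernel_of_ne_zero s hh).tendsto 0).sub_const (fracKernel s 0 h)
      simpa using hlim.abs.const_mul (min 1 (‖h‖ ^ 2))

variable {F : Type*} [NormedAddCommGroup F] [NormedSpace ℝ F]

lemma integrable_fracKernel_smul (hs0 : 0 < s) (hs1 : s < 1) {g : E → F}
    (hg : AEStronglyMeasurable g μ) {M : ℝ} (hM : ∀ h, ‖g h‖ ≤ M * min 1 (‖h‖ ^ 2)) (z : ℝ) :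
    Integrable (fun h => fracKernel s z h • g h) μ := by
  refine ((integrable_min_one_norm_sq_mul_fracKernel hs0 hs1 z).const_mul M).mono'
    ((measurable_fracKernel s z).aestronglyMeasurable.smul hg) (.of_forall fun h => ?_)
  have hK := fracKernel_nonneg s z h
  calc ‖fracKernel s z h • g h‖ = fracKernel s z h * ‖g h‖ := by
        rw [norm_smul, Real.norm_of_nonneg hK]
    _ ≤ fracKernel s z h * (M * min 1 (‖h‖ ^ 2)) := by gcongr; exact hM h
    _ = M * (min 1 (‖h‖ ^ 2) * fracKernel s z h) := by ring

lemma norm_integral_fracKernel_smul_sub_le (hs0 : 0 < s) (hs1 : s < 1) {g : E → F}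
    (hg : AEStronglyMeasurable g μ) {M : ℝ} (hM : ∀ h, ‖g h‖ ≤ M * min 1 (‖h‖ ^ 2)) (z : ℝ) :
    ‖∫ h, fracKernel s z h • g h ∂μ - ∫ h, fracKernel s 0 h • g h ∂μ‖
      ≤ M * ∫ h, min 1 (‖h‖ ^ 2) * |fracKernel s z h - fracKernel s 0 h| ∂μ := by
  have hweight : Integrable
      (fun h : E => min 1 (‖h‖ ^ 2) * |fracKernel s z h - fracKernel s 0 h|) μ := by
    refine ((integrable_min_one_norm_sq_mul_fracKernel hs0 hs1 z).sub
      (integrable_min_one_norm_sq_mul_fracKernel hs0 hs1 0)).abs.congr (.of_forall fun h => ?_)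
    simp only [Pi.sub_apply, ← mul_sub, abs_mul, abs_of_nonneg (le_min zero_le_one (sq_nonneg ‖h‖))]
  rw [← integral_sub (integrable_fracKernel_smul hs0 hs1 hg hM z)
    (integrable_fracKernel_smul hs0 hs1 hg hM 0), ← integral_const_mul]
  refine norm_integral_le_of_norm_le (hweight.const_mul M) (.of_forall fun h => ?_)
  rw [← sub_smul, norm_smul, Real.norm_eq_abs, ← mul_assoc, mul_comm]
  gcongr
  exact hM h

lemma tendstoUniformly_integral_fracKernel_smul (hs0 : 0 < s) (hs1 : s < 1) {ι : Type*}
    {g : ι → E → F} (hg : ∀ i, AEStronglyMeasurable (g i) μ) {M : ℝ}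
    (hM : ∀ i h, ‖g i h‖ ≤ M * min 1 (‖h‖ ^ 2)) :
    TendstoUniformly (fun z i => ∫ h, fracKernel s z h • g i h ∂μ)
      (fun i => ∫ h, fracKernel s 0 h • g i h ∂μ) (𝓝 0) := by
  have hlim := (tendsto_integral_min_one_norm_sq_mul_abs_fracKernel_sub
    (μ := μ) hs0 hs1).const_mul M
  rw [mul_zero] at hlim
  refine Metric.tendstoUniformly_iff.2 fun ε hε => ?_
  filter_upwards [hlim.eventually_lt_const hε] with z hz i
  rw [dist_comm, dist_eq_norm]
  exact (norm_integral_fracKernel_smul_sub_le hs0 hs1 (hg i) (hM i) z).trans_lt hz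

lemma setIntegral_fracKernel_zero_smul_sub (hs0 : 0 < s) (hs1 : s < 1) {u : E → F}
    (hu : Continuous u) {B : ℝ} (hB : ∀ x, ‖u x‖ ≤ B) (x : E) {ε : ℝ} (hε : 0 < ε) :
    ∫ y in {y | ε < ‖x - y‖}, fracKernel s 0 (x - y) • (u y - u x) ∂μ
      = (1 / 2 : ℝ) • ∫ h in {h | ε < ‖h‖}, fracKernel s 0 h • secondDifference u x h ∂μ := by
  have hmeas : MeasurableSet {h : E | ε < ‖h‖} := measurableSet_lt measurable_const measurable_norm
  have hmeas_sub : MeasurableSet {y : E | ε < ‖x - y‖} :=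
    measurableSet_lt measurable_const (by fun_prop)
  have heven : ({h : E | ε < ‖h‖}.indicator (fracKernel s 0)).Even := fun h => by
    simp only [indicator_apply, mem_ofPred_eq, norm_neg, fracKernel_even s 0 h]
  have hsymm := integral_smul_sub_eq_half_smul_integral_secondDifference (μ := μ)
    ((integrableOn_fracKernel_zero hs0 hs1 hε).integrable_indicator hmeas) heven
    hu.stronglyMeasurable hB x
  simp only [← indicator_smul_apply_left] at hsymm
  rw [integral_indicator hmeas] at hsymm
  rw [← hsymm, ← integral_indicator hmeas_sub]
  simp only [indicator_apply, mem_ofPred_eq, ite_smul, zero_smul]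

lemma tendsto_setIntegral_fracKernel_zero_smul_sub (hs0 : 0 < s) (hs1 : s < 1) {u : E → F}
    (hu : Continuous u) {B : ℝ} (hB : ∀ x, ‖u x‖ ≤ B) {x : E} {M : ℝ}
    (hM : ∀ h, ‖secondDifference u x h‖ ≤ M * min 1 (‖h‖ ^ 2)) :
    Tendsto (fun ε : ℝ => ∫ y in {y | ε < ‖x - y‖}, fracKernel s 0 (x - y) • (u y - u x) ∂μ)
      (𝓝[>] 0) (𝓝 ((1 / 2 : ℝ) • ∫ h, fracKernel s 0 h • secondDifference u x h ∂μ)) := by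
  have hint := integrable_fracKernel_smul (μ := μ) hs0 hs1
    (continuous_secondDifference hu x).aestronglyMeasurable hM 0
  refine ((tendsto_setIntegral_lt_norm hint (by simp [secondDifference_zero])).const_smul
    (1 / 2 : ℝ)).congr' ?_
  filter_upwards [self_mem_nhdsWithin] with ε hε
  exact (setIntegral_fracKernel_zero_smul_sub hs0 hs1 hu hB x hε).symm

end FracKernel

/-! ### The mass of the Poisson kernel -/

section Mass

variable {E : Type*} [NormedAddCommGroup E] [InnerProductSpace ℝ E] [FiniteDimensional ℝ E]
  [MeasurableSpace E] [BorelSpace E]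

lemma integral_rpow_mul_exp_neg_norm_sq_add_mul (a c : ℝ) {t : ℝ} (ht : 0 < t) :
    ∫ x : E, t ^ (a - 1) * Real.exp (-((‖x‖ ^ 2 + c) * t))
      = Real.pi ^ (Module.finrank ℝ E / 2 : ℝ)
        * (t ^ (a - Module.finrank ℝ E / 2 - 1) * Real.exp (-(c * t))) := by
  have hsplit (x : E) : t ^ (a - 1) * Real.exp (-((‖x‖ ^ 2 + c) * t))
      = t ^ (a - 1) * Real.exp (-(c * t)) * Real.exp (-t * ‖x‖ ^ 2) := by
    rw [mul_assoc, ← Real.exp_add]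
    ring_nf
  simp_rw [hsplit]
  rw [integral_const_mul, GaussianFourier.integral_rexp_neg_mul_sq_norm ht,
    Real.div_rpow Real.pi_pos.le ht.le, sub_right_comm a _ 1,
    Real.rpow_sub ht (a - 1)]
  ring

lemma integrable_rpow_mul_exp_neg_norm_sq_add_mul {a c : ℝ} (hc : 0 < c)
    (ha : Module.finrank ℝ E / 2 < a) :
    Integrable (fun p : E × ℝ => p.2 ^ (a - 1) * Real.exp (-((‖p.1‖ ^ 2 + c) * p.2)))
      ((volume : Measure E).prod (volume.restrict (Ioi 0))) := by
  rw [integrable_prod_iff' (Measurable.aestronglyMeasurable (by fun_prop))]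
  constructor
  · refine ae_restrict_of_forall_mem measurableSet_Ioi fun t (ht : 0 < t) => ?_
    refine .of_integral_ne_zero ?_
    rw [integral_rpow_mul_exp_neg_norm_sq_add_mul a c ht]
    positivity
  · have hgamma : IntegrableOn
        (fun t : ℝ => t ^ (a - Module.finrank ℝ E / 2 - 1) * Real.exp (-(c * t))) (Ioi 0) := by
      have ha := sub_pos.2 ha
      refine .of_integral_ne_zero ?_
      rw [Real.integral_rpow_mul_exp_neg_mul_Ioi ha hc]
      positivity
    refine (hgamma.const_mul (Real.pi ^ (Module.finrank ℝ E / 2 : ℝ))).congr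
      (ae_restrict_of_forall_mem measurableSet_Ioi fun t (ht : 0 < t) => ?_)
    exact (integral_rpow_mul_exp_neg_norm_sq_add_mul a c ht).symm.trans <|
      integral_congr_ae (.of_forall fun x => (Real.norm_of_nonneg (by positivity)).symm)

lemma integral_norm_sq_add_rpow_neg {a c : ℝ} (hc : 0 < c) (ha : Module.finrank ℝ E / 2 < a) :
    ∫ x : E, (‖x‖ ^ 2 + c) ^ (-a)
      = Real.pi ^ (Module.finrank ℝ E / 2 : ℝ) * Real.Gamma (a - Module.finrank ℝ E / 2)
        / Real.Gamma a * c ^ (Module.finrank ℝ E / 2 - a) := by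
  have ha0 : 0 < a := lt_of_le_of_lt (by positivity) ha
  have hlaplace {b r : ℝ} (hb : 0 < b) (hr : 0 < r) :
      ∫ t in Ioi (0 : ℝ), t ^ (b - 1) * Real.exp (-(r * t)) = r ^ (-b) * Real.Gamma b := by
    rw [Real.integral_rpow_mul_exp_neg_mul_Ioi hb hr, one_div, Real.inv_rpow hr.le,
      Real.rpow_neg hr.le]
  -- Write `(‖x‖² + c)^{-a} Γ(a)` as a Laplace transform in `t`; the integral over `x` is Gaussian.
  have hswap := integral_integral_swap
    (f := fun (x : E) (t : ℝ) => t ^ (a - 1) * Real.exp (-((‖x‖ ^ 2 + c) * t)))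
    (integrable_rpow_mul_exp_neg_norm_sq_add_mul hc ha)
  have hleft (x : E) : ∫ t in Ioi (0 : ℝ), t ^ (a - 1) * Real.exp (-((‖x‖ ^ 2 + c) * t))
      = (‖x‖ ^ 2 + c) ^ (-a) * Real.Gamma a := hlaplace ha0 (by positivity)
  have hright : ∫ t in Ioi (0 : ℝ), ∫ x : E, t ^ (a - 1) * Real.exp (-((‖x‖ ^ 2 + c) * t))
      = Real.pi ^ (Module.finrank ℝ E / 2 : ℝ)
        * (c ^ (-(a - Module.finrank ℝ E / 2)) * Real.Gamma (a - Module.finrank ℝ E / 2)) := by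
    rw [← hlaplace (sub_pos.2 ha) hc, ← integral_const_mul]
    exact setIntegral_congr_fun measurableSet_Ioi fun t ht =>
      integral_rpow_mul_exp_neg_norm_sq_add_mul a c ht
  simp_rw [hleft, integral_mul_const, hright, neg_sub] at hswap
  rw [div_mul_eq_mul_div, eq_div_iff (Real.Gamma_pos_of_pos ha0).ne', hswap]
  ring

lemma integral_fracKernel {s z : ℝ} (hs : 0 < s) (hz : 0 < z) :
    ∫ x : E, fracKernel s z x = Real.pi ^ (Module.finrank ℝ E / 2 : ℝ) * Real.Gamma s
      / Real.Gamma (Module.finrank ℝ E / 2 + s) * z ^ (-(2 * s)) := by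
  have hexp : -((Module.finrank ℝ E : ℝ) + 2 * s) / 2 = -(Module.finrank ℝ E / 2 + s) := by ring
  simp_rw [fracKernel, hexp]
  rw [integral_norm_sq_add_rpow_neg (sq_pos_of_pos hz) (by linarith), add_sub_cancel_left,
    sub_add_cancel_left, ← Real.rpow_natCast_mul hz.le, Nat.cast_ofNat, mul_neg]

lemma integrable_fracKernel {s z : ℝ} (hs : 0 < s) (hz : 0 < z) :
    Integrable (fracKernel s z : E → ℝ) := by
  refine .of_integral_ne_zero ?_
  rw [integral_fracKernel hs hz]
  positivity

end Mass

/-! ### The extension and the fractional Laplacian as integrals of second differences -/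

section Expansion

lemma Pker_eq_mul_fracKernel (n : ℕ) (s z : ℝ) (x : En n) :
    Pker n s z x = pns n s * z ^ (2 * s) * fracKernel s z x := by
  rw [Pker, fracKernel, finrank_euclideanSpace_fin]

variable {s : ℝ}

lemma integral_Pker (n : ℕ) (hs : 0 < s) {z : ℝ} (hz : 0 < z) : ∫ x, Pker n s z x = 1 := by
  simp_rw [Pker_eq_mul_fracKernel]
  rw [integral_const_mul, integral_fracKernel hs hz, finrank_euclideanSpace_fin,
    Real.rpow_neg hz.le, pns]
  field_simp

lemma rpow_mul_CSext_sub_eq {n : ℕ} (hs : 0 < s) {u : En n → ℝ} (hu : Continuous u) {B : ℝ}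
    (hB : ∀ x, ‖u x‖ ≤ B) (x : En n) {z : ℝ} (hz : 0 < z) :
    z ^ (-(2 * s)) * (CSext n s u x z - u x)
      = pns n s / 2 * ∫ h, fracKernel s z h • secondDifference u x h := by
  have hP : Integrable (fun y => Pker n s z (x - y)) := by
    simp_rw [Pker_eq_mul_fracKernel]
    exact ((integrable_fracKernel hs hz).const_mul _).comp_sub_left x
  have hmass : ∫ y, Pker n s z (x - y) = 1 :=
    (integral_sub_left_eq_self (Pker n s z) volume x).trans (integral_Pker n hs hz)
  have hdiff : CSext n s u x z - u x = ∫ y, Pker n s z (x - y) * (u y - u x) := by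
    simp_rw [mul_sub]
    rw [integral_sub (hP.mul_bdd hu.aestronglyMeasurable (.of_forall hB)) (hP.mul_const _),
      integral_mul_const, hmass, one_mul, CSext, Pconv]
  have hsymm := integral_smul_sub_eq_half_smul_integral_secondDifference
    (integrable_fracKernel hs hz) (fracKernel_even s z) hu.stronglyMeasurable hB x
  simp only [smul_eq_mul] at hsymm ⊢
  simp_rw [hdiff, Pker_eq_mul_fracKernel, mul_assoc (pns n s * z ^ (2 * s))]
  rw [integral_const_mul, hsymm, Real.rpow_neg hz.le]
  field_simp

lemma fracLap_eq {n : ℕ} (hs0 : 0 < s) (hs1 : s < 1) {u : En n → ℝ} (hu : Continuous u) {B : ℝ}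
    (hB : ∀ x, ‖u x‖ ≤ B) {x : En n} {M : ℝ}
    (hM : ∀ h, ‖secondDifference u x h‖ ≤ M * min 1 (‖h‖ ^ 2)) :
    fracLap n s u x = -(Cns n s / 2) * ∫ h, fracKernel s 0 h • secondDifference u x h := by
  have hintegrand (y : En n) : (u x - u y) / ‖x - y‖ ^ ((n : ℝ) + 2 * s)
      = -(fracKernel s 0 (x - y) • (u y - u x)) := by
    rw [fracKernel_zero_eq_norm_rpow, finrank_euclideanSpace_fin, Real.rpow_neg (norm_nonneg _),
      smul_eq_mul]
    ring
  simp_rw [fracLap, hintegrand, integral_neg]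
  rw [(tendsto_setIntegral_fracKernel_zero_smul_sub hs0 hs1 hu hB hM).neg.limUnder_eq, smul_eq_mul]
  ring

lemma abs_Gamma_neg (hs0 : 0 < s) (hs1 : s < 1) :
    |Real.Gamma (-s)| = Real.Gamma (1 - s) / s := by
  have hGamma : 0 < Real.Gamma (1 - s) := Real.Gamma_pos_of_pos (sub_pos.2 hs1)
  have hrec := Real.Gamma_add_one (neg_ne_zero.2 hs0.ne')
  rw [neg_add_eq_sub] at hrec
  rw [eq_div_iff hs0.ne', ← abs_of_pos hGamma, hrec, abs_mul, abs_neg, abs_of_pos hs0, mul_comm]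

lemma one_div_two_mul_betaS_mul_Cns (n : ℕ) (hs0 : 0 < s) (hs1 : s < 1) :
    1 / (2 * s * betaS s) * Cns n s = pns n s := by
  have hGamma : 0 < Real.Gamma (1 - s) := Real.Gamma_pos_of_pos (sub_pos.2 hs1)
  have htwo : (2 : ℝ) ^ (2 * s - 1) = 4 ^ s / 2 := by
    rw [Real.rpow_sub two_pos, Real.rpow_mul two_pos.le]
    norm_num
  rw [betaS, Cns, pns, abs_Gamma_neg hs0 hs1, htwo]
  field_simp

theorem CSext_uniform_expansion_general (n : ℕ) (hs0 : 0 < s) (hs1 : s < 1) {u : En n → ℝ} {B : ℝ}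
    (hB : ∀ x, ‖u x‖ ≤ B) (hu : Differentiable ℝ u) {L : ℝ≥0} (hL : LipschitzWith L (fderiv ℝ u)) :
    TendstoUniformly (fun z x => z ^ (-(2 * s)) * (CSext n s u x z - u x))
      (fun x => -(1 / (2 * s * betaS s)) * fracLap n s u x) (𝓝[>] 0) := by
  have hM := norm_secondDifference_le hB hu hL
  have hlim : TendstoUniformly
      (fun z x => pns n s / 2 * ∫ h, fracKernel s z h • secondDifference u x h)
      (fun x => pns n s / 2 * ∫ h, fracKernel s 0 h • secondDifference u x h) (𝓝 0) :=
    (uniformContinuous_const_smul (pns n s / 2)).comp_tendstoUniformly <|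
      tendstoUniformly_integral_fracKernel_smul hs0 hs1
        (fun x => (continuous_secondDifference hu.continuous x).aestronglyMeasurable) hM
  have htarget (x : En n) : -(1 / (2 * s * betaS s)) * fracLap n s u x
      = pns n s / 2 * ∫ h, fracKernel s 0 h • secondDifference u x h := by
    rw [fracLap_eq hs0 hs1 hu.continuous hB (hM x), ← one_div_two_mul_betaS_mul_Cns n hs0 hs1]
    ring
  simp_rw [htarget]
  intro V hV
  filter_upwards [nhdsWithin_le_nhds (hlim V hV), self_mem_nhdsWithin] with z hz hz0 x
  rw [rpow_mul_CSext_sub_eq hs0 hu.continuous hB x hz0]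
  exact hz x

end Expansion

/-- **Uniform first-order expansion of the CS extension** (Euclidean case): for every compact
`K ⊂ ℝⁿ`, `z^{-2s}(U(·,z) - u) → -(2sβ_s)^{-1}(-Δ)^s u` uniformly on `K` as `z → 0⁺`; i.e.
`U(x,z) = u(x) - (z^{2s}/(2sβ_s))(-Δ)^s u(x) + o(z^{2s})` uniformly on compact sets. -/
theorem CSext_uniform_expansion (n : ℕ) (hn : 1 ≤ n) (s : ℝ) (hs0 : 0 < s) (hs1 : s < 1)
    (u : En n → ℝ) (hu : ContDiff ℝ (⊤ : ℕ∞) u) (huc : HasCompactSupport u) :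
    ∀ K : Set (En n), IsCompact K →
      TendstoUniformlyOn
        (fun (z : ℝ) (x : En n) => z ^ (-(2 * s)) * (CSext n s u x z - u x))
        (fun x => -(1 / (2 * s * betaS s)) * fracLap n s u x)
        (𝓝[>] (0 : ℝ)) K := by
  intro K _
  obtain ⟨B, hB⟩ := hu.continuous.bounded_above_of_compact_support huc
  obtain ⟨L, hL⟩ := (hu.fderiv_right (m := 1) (by norm_cast)).lipschitzWith_of_hasCompactSupport
    (huc.fderiv ℝ) one_ne_zero
  exact (CSext_uniform_expansion_general n hs0 hs1 hB (hu.differentiable (by simp))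
    hL).tendstoUniformlyOn
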